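/- arXiv:2204.09754 — 2 statements merged into one kernel-verified Lean document; each statement's English description precedes it below -/
import Mathlib

section
/- High-frequency behavior of the substructured iteration matrix entries: Let q₁, q₂, q₃ > 0 be Robin parameters and δ > 0. Define for k ∈ ℝ, with λ = λ(k), the denominator D(k) := (λ+q₁)(λ+q₃)e^{λ(L+δ)} − (λ−q₁)(λ−q₃)e^{−λ(L+δ)}, and α(k) := ((λ+q₁)(λ+q₂)e^{λδ} − (λ−q₁)(λ−q₂)e^{−λδ})/D(k), β(k) := ((λ+q₂)(λ−q₃)e^{−λL} − (λ−q₂)(λ+q₃)e^{λL})/D(k). Then, as k → ∞, α(k) → 0 and β(k) · (λ(k)+q₁) e^{λ(k)δ} / (λ(k)−q₂) → −1 (i.e. β(k) is asymptotically equivalent to −((λ(k)−q₂)/(λ(k)+q₁)) e^{−λ(k)δ}). -/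
open Complex Real Filter

/-- The complex square root with positive real part of `k² + η - iε`. -/
noncomputable def lam (η ε k : ℝ) : ℂ :=
  (((k ^ 2 + η : ℝ) : ℂ) - (ε : ℂ) * Complex.I) ^ ((1 : ℂ) / 2)

/-- Denominator `D(k)`. -/
noncomputable def Dden (η ε L δ q₁ q₃ : ℝ) (k : ℝ) : ℂ :=
  let l := lam η ε k
  (l + (q₁ : ℂ)) * (l + (q₃ : ℂ)) * Complex.exp (l * ((L : ℂ) + (δ : ℂ)))
    - (l - (q₁ : ℂ)) * (l - (q₃ : ℂ)) * Complex.exp (-(l * ((L : ℂ) + (δ : ℂ))))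

/-- Numerator coefficient `α(k)`. -/
noncomputable def alphaHF (η ε L δ q₁ q₂ q₃ : ℝ) (k : ℝ) : ℂ :=
  let l := lam η ε k
  ((l + (q₁ : ℂ)) * (l + (q₂ : ℂ)) * Complex.exp (l * (δ : ℂ))
    - (l - (q₁ : ℂ)) * (l - (q₂ : ℂ)) * Complex.exp (-(l * (δ : ℂ))))
    / Dden η ε L δ q₁ q₃ k

/-- Coefficient `β(k)`. -/
noncomputable def betaHF (η ε L δ q₁ q₂ q₃ : ℝ) (k : ℝ) : ℂ :=
  let l := lam η ε k
  ((l + (q₂ : ℂ)) * (l - (q₃ : ℂ)) * Complex.exp (-(l * (L : ℂ)))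
    - (l - (q₂ : ℂ)) * (l + (q₃ : ℂ)) * Complex.exp (l * (L : ℂ)))
    / Dden η ε L δ q₁ q₃ k

theorem le_lam_re (η ε k : ℝ) (hη : 0 < η) (hk : 0 ≤ k) : k ≤ (lam η ε k).re := by
  unfold lam
  rw [one_div, Complex.cpow_inv_two_re]
  apply Real.le_sqrt_of_sq_le
  set z : ℂ := ((k ^ 2 + η : ℝ) : ℂ) - (ε : ℂ) * Complex.I with hz
  have h1 : z.re = k ^ 2 + η := by
    rw [hz, Complex.sub_re, Complex.ofReal_re]; simp
  have h2 := Complex.re_le_norm z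
  linarith

theorem lam_re_tendsto (η ε : ℝ) (hη : 0 < η) :
    Tendsto (fun k : ℝ => (lam η ε k).re) atTop atTop := by
  refine tendsto_atTop_mono' _ ?_ tendsto_id
  filter_upwards [eventually_ge_atTop 0] with k hk using le_lam_re η ε k hη hk

theorem exp_lam_tendsto (η ε c : ℝ) (hη : 0 < η) (hc : 0 < c) :
    Tendsto (fun k : ℝ => Complex.exp (-(lam η ε k * (c : ℂ)))) atTop (nhds 0) := by
  rw [Complex.tendsto_exp_nhds_zero_iff]
  have : ∀ k, (-(lam η ε k * (c : ℂ))).re = -((lam η ε k).re * c) := by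
    intro k; simp
  simp only [this]
  exact tendsto_neg_atTop_atBot.comp ((lam_re_tendsto η ε hη).atTop_mul_const hc)

theorem lam_inv_tendsto (η ε : ℝ) (hη : 0 < η) :
    Tendsto (fun k : ℝ => (lam η ε k)⁻¹) atTop (nhds 0) := by
  apply tendsto_inv₀_cobounded.comp
  rw [← tendsto_norm_atTop_iff_cobounded]
  exact tendsto_atTop_mono (fun k => Complex.re_le_norm _) (lam_re_tendsto η ε hη)

/-- High frequency behavior of the substructured iteration matrix entries:
as `k → ∞`, `α(k) → 0` and `β(k) ~ -((λ(k)-q₂)/(λ(k)+q₁)) e^{-λ(k)δ}`. -/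
theorem high_frequency_entries
    (η ε L δ q₁ q₂ q₃ : ℝ) (hη : 0 < η) (hε : 0 < ε) (hL : 0 < L) (hδ : 0 < δ)
    (hq₁ : 0 < q₁) (hq₂ : 0 < q₂) (hq₃ : 0 < q₃) :
    Tendsto (fun k : ℝ => alphaHF η ε L δ q₁ q₂ q₃ k) atTop (nhds 0) ∧
    Tendsto (fun k : ℝ => betaHF η ε L δ q₁ q₂ q₃ k
        * (lam η ε k + (q₁ : ℂ)) * Complex.exp (lam η ε k * (δ : ℂ))
        / (lam η ε k - (q₂ : ℂ))) atTop (nhds (-1)) := by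
  have hi := lam_inv_tendsto η ε hη
  have hEL := exp_lam_tendsto η ε L hη hL
  have hEd := exp_lam_tendsto η ε δ hη hδ
  have hT := hi.prodMk_nhds (hEL.prodMk_nhds hEd)
  have hne : ∀ᶠ k : ℝ in atTop, lam η ε k ≠ 0 := by
    filter_upwards [eventually_gt_atTop 0] with k hk h0
    have := le_lam_re η ε k hη hk.le
    rw [h0, Complex.zero_re] at this
    linarith
  have hD : ∀ k : ℝ, lam η ε k ≠ 0 → Dden η ε L δ q₁ q₃ k =
      (lam η ε k ^ 2 * Complex.exp (lam η ε k * L) * Complex.exp (lam η ε k * δ)) *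
      ((1 + q₁ * (lam η ε k)⁻¹) * (1 + q₃ * (lam η ε k)⁻¹)
        - (1 - q₁ * (lam η ε k)⁻¹) * (1 - q₃ * (lam η ε k)⁻¹)
          * Complex.exp (-(lam η ε k * L)) ^ 2 * Complex.exp (-(lam η ε k * δ)) ^ 2) := by
    intro k h
    have e1 := Complex.exp_ne_zero (lam η ε k * L)
    have e2 := Complex.exp_ne_zero (lam η ε k * δ)
    simp only [Dden, mul_add, Complex.exp_neg, Complex.exp_add]
    field_simp
  constructor
  · have hF : ContinuousAt (fun p : ℂ × ℂ × ℂ =>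
        ((1 + q₁ * p.1) * (1 + q₂ * p.1) * p.2.1
          - (1 - q₁ * p.1) * (1 - q₂ * p.1) * p.2.1 * p.2.2 ^ 2) /
        ((1 + q₁ * p.1) * (1 + q₃ * p.1)
          - (1 - q₁ * p.1) * (1 - q₃ * p.1) * p.2.1 ^ 2 * p.2.2 ^ 2)) (0, 0, 0) := by
      apply ContinuousAt.div
      · fun_prop
      · fun_prop
      · simp
    have h := hF.tendsto.comp hT
    simp only [mul_zero, sub_zero, zero_mul, zero_div] at h
    refine h.congr' ?_
    filter_upwards [hne] with k hk
    have e1 := Complex.exp_ne_zero (lam η ε k * L)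
    have e2 := Complex.exp_ne_zero (lam η ε k * δ)
    simp only [alphaHF, Function.comp]
    rw [hD k hk, ← mul_div_mul_left _ _ (mul_ne_zero (mul_ne_zero (pow_ne_zero 2 hk) e1) e2)]
    congr 1
    simp only [Complex.exp_neg]
    field_simp
  · have hF : ContinuousAt (fun p : ℂ × ℂ × ℂ =>
        (((1 + q₂ * p.1) * (1 - q₃ * p.1) * p.2.1 ^ 2
          - (1 - q₂ * p.1) * (1 + q₃ * p.1)) * (1 + q₁ * p.1)) /
        (((1 + q₁ * p.1) * (1 + q₃ * p.1)
          - (1 - q₁ * p.1) * (1 - q₃ * p.1) * p.2.1 ^ 2 * p.2.2 ^ 2)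
          * (1 - q₂ * p.1))) (0, 0, 0) := by
      apply ContinuousAt.div
      · fun_prop
      · fun_prop
      · simp
    have h := hF.tendsto.comp hT
    norm_num at h
    refine h.congr' ?_
    filter_upwards [hne] with k hk
    have e1 := Complex.exp_ne_zero (lam η ε k * L)
    have e2 := Complex.exp_ne_zero (lam η ε k * δ)
    have e3 : lam η ε k - q₂ = lam η ε k * (1 - q₂ * (lam η ε k)⁻¹) := by field_simp
    simp only [betaHF, Function.comp]
    rw [hD k hk, div_mul_eq_mul_div, div_mul_eq_mul_div, div_div,
      ← mul_div_mul_left _ _ (mul_ne_zero (mul_ne_zero (mul_ne_zero (pow_ne_zero 2 hk) e1) e2) hk)]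
    congr 1
    · simp only [Complex.exp_neg]
      field_simp
    · rw [e3]; ring
end

section
/- Low-frequency expansion of the iteration matrix entries for the asymptotically optimized one-sided Robin parameter: Let C > 0 and for δ > 0 set p(δ) := (C²/2) δ^{-1/3}. Define, with λ = s := λ(k_min), D(δ) := (λ+p(δ))² e^{λ(L+δ)} − (λ−p(δ))² e^{−λ(L+δ)}, α(δ) := ((λ+p(δ))² e^{λδ} − (λ−p(δ))² e^{−λδ})/D(δ) and β(δ) := (λ² − p(δ)²)(e^{−λL} − e^{λL})/D(δ). Then, as δ → 0⁺, α(δ) = (8 s e^{−sL} / (C² (1 − e^{−2sL}))) δ^{1/3} + O(δ^{2/3}) and β(δ) = 1 − (4 s (e^{−2sL} + 1) / (C² (1 − e^{−2sL}))) δ^{1/3} + O(δ^{2/3}) (Big-O in complex modulus). -/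
open Complex Real Asymptotics Topology Filter

/-- Low-frequency entry `α(δ)` for Robin parameter `p(δ)`, evaluated at the
minimal frequency (`λ = s`). -/
noncomputable def alphaLF (s : ℂ) (L δ p : ℝ) : ℂ :=
  ((s + (p : ℂ)) ^ 2 * Complex.exp (s * (δ : ℂ))
      - (s - (p : ℂ)) ^ 2 * Complex.exp (-(s * (δ : ℂ))))
    / ((s + (p : ℂ)) ^ 2 * Complex.exp (s * ((L : ℂ) + (δ : ℂ)))
      - (s - (p : ℂ)) ^ 2 * Complex.exp (-(s * ((L : ℂ) + (δ : ℂ)))))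

/-- Low-frequency entry `β(δ)` for Robin parameter `p(δ)`, evaluated at the
minimal frequency (`λ = s`). -/
noncomputable def betaLF (s : ℂ) (L δ p : ℝ) : ℂ :=
  ((s ^ 2 - (p : ℂ) ^ 2)
      * (Complex.exp (-(s * (L : ℂ))) - Complex.exp (s * (L : ℂ))))
    / ((s + (p : ℂ)) ^ 2 * Complex.exp (s * ((L : ℂ) + (δ : ℂ)))
      - (s - (p : ℂ)) ^ 2 * Complex.exp (-(s * ((L : ℂ) + (δ : ℂ)))))

lemma aux_exp (s : ℂ) :
    (fun z : ℂ => Complex.exp (s * z ^ 3) - 1) =O[𝓝 (0 : ℂ)] (fun z : ℂ => z ^ 2) := by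
  have h1 : (fun w : ℂ => Complex.exp w - Complex.exp 0) =O[𝓝 (0 : ℂ)] (fun w : ℂ => w - 0) :=
    (Complex.hasDerivAt_exp 0).differentiableAt.isBigO_sub
  have ht : Tendsto (fun z : ℂ => s * z ^ 3) (𝓝 0) (𝓝 0) := by
    have : ContinuousAt (fun z : ℂ => s * z ^ 3) 0 := by fun_prop
    simpa [ContinuousAt] using this
  have h2 := h1.comp_tendsto ht
  simp only [Function.comp_def, Complex.exp_zero, sub_zero] at h2
  refine h2.trans ?_
  have hb : (fun z : ℂ => s * z) =O[𝓝 (0 : ℂ)] (fun _ : ℂ => (1 : ℂ)) :=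
    (show ContinuousAt (fun z : ℂ => s * z) 0 by fun_prop).isBigO_one ℂ
  have h3 := hb.mul (isBigO_refl (fun z : ℂ => z ^ 2) (𝓝 0))
  refine (h3.congr_left fun z => ?_).congr_right fun z => ?_
  · ring
  · ring

lemma aux_quot (s : ℂ) (P Q R G : ℂ → ℂ) (hP : ContinuousAt P 0) (hQ : ContinuousAt Q 0)
    (hR : ContinuousAt R 0) (hG : ContinuousAt G 0) (hG0 : G 0 ≠ 0) :
    (fun z : ℂ => (P z * (Complex.exp (s * z ^ 3) - 1) + Q z * (Complex.exp (-s * z ^ 3) - 1)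
      + R z * z ^ 2) / G z) =O[𝓝 (0 : ℂ)] (fun z : ℂ => z ^ 2) := by
  have h1 := (hP.isBigO_one ℂ).mul (aux_exp s)
  have h2 := (hQ.isBigO_one ℂ).mul (aux_exp (-s))
  have h3 := (hR.isBigO_one ℂ).mul (isBigO_refl (fun z : ℂ => z ^ 2) (𝓝 0))
  have h4 := ((hG.inv₀ hG0).isBigO_one ℂ).mul ((h1.add h2).add h3)
  refine (h4.congr_left fun z => ?_).congr_right fun z => ?_
  · simp only [Pi.inv_apply]
    rw [div_eq_mul_inv, mul_comm]
  · ring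

/-- rescaled denominator -/
noncomputable def auxG (s c E F z : ℂ) : ℂ :=
  (s * z + c) ^ 2 * (E * Complex.exp (s * z ^ 3))
    - (s * z - c) ^ 2 * (F * Complex.exp (-s * z ^ 3))

lemma auxG_cont (s c E F : ℂ) : Continuous (auxG s c E F) := by
  unfold auxG; fun_prop

lemma auxG_zero (s c E F : ℂ) (hc : c ≠ 0) (hEF : E - F ≠ 0) : auxG s c E F 0 ≠ 0 := by
  have : auxG s c E F 0 = c ^ 2 * (E - F) := by simp [auxG]; ring
  rw [this]; exact mul_ne_zero (pow_ne_zero _ hc) hEF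

lemma aux_alpha (s c E F : ℂ) (hc : c ≠ 0) (hEF : E - F ≠ 0) :
    (fun z : ℂ => ((s * z + c) ^ 2 * Complex.exp (s * z ^ 3)
      - (s * z - c) ^ 2 * Complex.exp (-s * z ^ 3)) / auxG s c E F z
      - 4 * s / (c * (E - F)) * z) =O[𝓝 (0 : ℂ)] (fun z : ℂ => z ^ 2) := by
  obtain ⟨a, ha⟩ : ∃ a, a = 4 * s / (c * (E - F)) := ⟨_, rfl⟩
  have ha' : a * (c * (E - F)) = 4 * s := by rw [ha]; field_simp
  rw [← ha]
  have hcont := (auxG_cont s c E F).continuousAt (x := 0)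
  have h0 := auxG_zero s c E F hc hEF
  have key := aux_quot s (fun z => (s * z + c) ^ 2 * (1 - a * z * E))
    (fun z => -((s * z - c) ^ 2 * (1 - a * z * F)))
    (fun z => -a * (2 * s * c * (E + F) + s ^ 2 * z * (E - F)))
    (auxG s c E F) (by fun_prop) (by fun_prop) (by fun_prop) hcont h0
  refine key.congr' ?_ EventuallyEq.rfl
  filter_upwards [hcont.eventually_ne h0] with z hz
  rw [eq_sub_iff_add_eq, div_add' _ _ _ hz]
  congr 1
  unfold auxG
  linear_combination (c * z) * ha'

lemma aux_beta (s c E F : ℂ) (hc : c ≠ 0) (hEF : E - F ≠ 0) :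
    (fun z : ℂ => ((s ^ 2 * z ^ 2 - c ^ 2) * (F - E)) / auxG s c E F z
      - (1 - 2 * s * (E + F) / (c * (E - F)) * z)) =O[𝓝 (0 : ℂ)] (fun z : ℂ => z ^ 2) := by
  obtain ⟨b, hb⟩ : ∃ b, b = 2 * s * (E + F) / (c * (E - F)) := ⟨_, rfl⟩
  have hb' : b * (c * (E - F)) = 2 * s * (E + F) := by rw [hb]; field_simp
  rw [← hb]
  have hcont := (auxG_cont s c E F).continuousAt (x := 0)
  have h0 := auxG_zero s c E F hc hEF
  have key := aux_quot s (fun z => -((s * z + c) ^ 2 * (1 - b * z) * E))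
    (fun z => ((s * z - c) ^ 2 * (1 - b * z) * F))
    (fun z => s ^ 2 * (F - E) - s ^ 2 * (E - F) + b * (2 * s * c * (E + F))
      + b * s ^ 2 * z * (E - F))
    (auxG s c E F) (by fun_prop) (by fun_prop) (by fun_prop) hcont h0
  refine key.congr' ?_ EventuallyEq.rfl
  filter_upwards [hcont.eventually_ne h0] with z hz
  rw [eq_sub_iff_add_eq, div_add' _ _ _ hz]
  congr 1
  unfold auxG
  linear_combination (-c * z) * hb'

lemma lam_re_pos (η ε k : ℝ) (hη : 0 < η) : 0 < (lam η ε k).re := by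
  unfold lam
  set w : ℂ := ((k ^ 2 + η : ℝ) : ℂ) - (ε : ℂ) * Complex.I with hw
  have hre : 0 < w.re := by simp [hw, -ofReal_add, -ofReal_pow]; positivity
  have hw0 : w ≠ 0 := by intro h; simp [h] at hre
  have harg := (Complex.abs_arg_lt_pi_div_two_iff (z := w)).2 (Or.inl hre)
  rw [Complex.cpow_def_of_ne_zero hw0, Complex.exp_re]
  apply mul_pos (Real.exp_pos _)
  apply Real.cos_pos_of_mem_Ioo
  have him : (Complex.log w * (1 / 2)).im = w.arg / 2 := by
    rw [one_div, ← div_eq_mul_inv, Complex.div_ofNat_im, Complex.log_im]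
  rw [him]
  have := abs_lt.1 harg
  constructor <;> linarith [Real.pi_pos]

lemma aux_scale (δ : ℝ) (hδ : 0 < δ) :
    δ ^ (-(1 : ℝ) / 3) = (δ ^ ((1 : ℝ) / 3))⁻¹ ∧ δ ^ ((2 : ℝ) / 3) = (δ ^ ((1 : ℝ) / 3)) ^ 2 ∧
    (δ ^ ((1 : ℝ) / 3)) ^ 3 = δ := by
  refine ⟨?_, ?_, ?_⟩
  · rw [← Real.rpow_neg hδ.le]; norm_num
  · rw [← Real.rpow_natCast, ← Real.rpow_mul hδ.le]; norm_num
  · rw [← Real.rpow_natCast, ← Real.rpow_mul hδ.le]; norm_num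

lemma aux_transfer (f : ℂ → ℂ) (g : ℝ → ℂ) (hf : f =O[𝓝 (0 : ℂ)] (fun z : ℂ => z ^ 2))
    (h : ∀ δ : ℝ, 0 < δ → g δ = f ((δ ^ ((1 : ℝ) / 3) : ℝ) : ℂ)) :
    g =O[𝓝[>] (0 : ℝ)] (fun δ : ℝ => δ ^ ((2 : ℝ) / 3)) := by
  have ht : Tendsto (fun δ : ℝ => ((δ ^ ((1 : ℝ) / 3) : ℝ) : ℂ)) (𝓝[>] 0) (𝓝 0) := by
    have h1 : ContinuousAt (fun δ : ℝ => ((δ ^ ((1 : ℝ) / 3) : ℝ) : ℂ)) 0 :=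
      Complex.continuous_ofReal.continuousAt.comp
        (Real.continuousAt_rpow_const 0 _ (Or.inr (by norm_num)))
    have h2 := h1.tendsto
    rw [Real.zero_rpow (by norm_num), Complex.ofReal_zero] at h2
    exact h2.mono_left nhdsWithin_le_nhds
  have h3 := (hf.comp_tendsto ht).norm_right
  refine h3.congr' ?_ ?_
  · filter_upwards [self_mem_nhdsWithin] with δ hδ
    exact (h δ hδ).symm
  · filter_upwards [self_mem_nhdsWithin] with δ hδ
    have hp : (0:ℝ) < δ ^ ((1 : ℝ) / 3) := Real.rpow_pos_of_pos hδ _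
    rw [(aux_scale δ hδ).2.1]
    simp [abs_of_pos hp, -one_div]

/-- Low-frequency expansion of the iteration matrix entries for the
asymptotically optimized one-sided Robin parameter `p(δ) = (C²/2) δ^{-1/3}`:
as `δ → 0⁺`,
`α(δ) = (8 s e^{-sL} / (C² (1 - e^{-2sL}))) δ^{1/3} + O(δ^{2/3})` and
`β(δ) = 1 - (4 s (e^{-2sL} + 1) / (C² (1 - e^{-2sL}))) δ^{1/3} + O(δ^{2/3})`. -/
theorem low_frequency_entry_expansion
    (η ε L kmin C : ℝ) (hη : 0 < η) (hε : 0 < ε) (hL : 0 < L)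
    (hkmin : 0 < kmin) (hC : 0 < C) (s : ℂ) (hs : s = lam η ε kmin) :
    (fun δ : ℝ => alphaLF s L δ (C ^ 2 / 2 * δ ^ (-(1 : ℝ) / 3))
        - (8 * s * Complex.exp (-(s * (L : ℂ)))
            / ((C : ℂ) ^ 2 * (1 - Complex.exp (-(2 * s * (L : ℂ))))))
          * ((δ ^ ((1 : ℝ) / 3) : ℝ) : ℂ))
      =O[𝓝[>] (0 : ℝ)] (fun δ : ℝ => δ ^ ((2 : ℝ) / 3)) ∧
    (fun δ : ℝ => betaLF s L δ (C ^ 2 / 2 * δ ^ (-(1 : ℝ) / 3))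
        - (1 - (4 * s * (Complex.exp (-(2 * s * (L : ℂ))) + 1)
            / ((C : ℂ) ^ 2 * (1 - Complex.exp (-(2 * s * (L : ℂ))))))
          * ((δ ^ ((1 : ℝ) / 3) : ℝ) : ℂ)))
      =O[𝓝[>] (0 : ℝ)] (fun δ : ℝ => δ ^ ((2 : ℝ) / 3)) := by
  have hre : 0 < s.re := hs ▸ lam_re_pos η ε kmin hη
  obtain ⟨E, hE⟩ : ∃ E, E = Complex.exp (s * (L : ℂ)) := ⟨_, rfl⟩
  obtain ⟨F, hF⟩ : ∃ F, F = Complex.exp (-(s * (L : ℂ))) := ⟨_, rfl⟩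
  have hEF1 : E * F = 1 := by rw [hE, hF, ← Complex.exp_add]; simp
  have hF2 : Complex.exp (-(2 * s * (L : ℂ))) = F ^ 2 := by
    rw [hF, ← Complex.exp_nat_mul]; congr 1; push_cast; ring
  have hE0 : E ≠ 0 := by rw [hE]; exact Complex.exp_ne_zero _
  have hF0 : F ≠ 0 := by rw [hF]; exact Complex.exp_ne_zero _
  have hEF : E - F ≠ 0 := by
    intro h
    have h1 : ‖E‖ = ‖F‖ := by rw [sub_eq_zero.1 h]
    rw [hE, hF, Complex.norm_exp, Complex.norm_exp, Real.exp_eq_exp] at h1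
    simp at h1
    nlinarith [mul_pos hre hL]
  have hF1 : 1 - F ^ 2 = F * (E - F) := by linear_combination -hEF1
  have hCc : (C : ℂ) ≠ 0 := by exact_mod_cast hC.ne'
  obtain ⟨c, hc⟩ : ∃ c : ℂ, c = (C : ℂ) ^ 2 / 2 := ⟨_, rfl⟩
  have hc0 : c ≠ 0 := by rw [hc]; exact div_ne_zero (pow_ne_zero _ hCc) two_ne_zero
  have hC2 : (C : ℂ) ^ 2 = 2 * c := by rw [hc]; ring
  have hden : ∀ δ : ℝ, 0 < δ → ∀ z : ℂ, z ≠ 0 → z ^ 3 = (δ : ℂ) →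
      ((s + c * z⁻¹) ^ 2 * Complex.exp (s * ((L : ℂ) + (δ : ℂ)))
      - (s - c * z⁻¹) ^ 2 * Complex.exp (-(s * ((L : ℂ) + (δ : ℂ)))))
      = auxG s c E F z / z ^ 2 := by
    intro δ hδ z hz h3
    rw [mul_add, Complex.exp_add, neg_add, Complex.exp_add, ← hE, ← hF, ← h3]
    unfold auxG
    rw [neg_mul]
    field_simp
  have hcast : ∀ δ : ℝ, 0 < δ → ((C ^ 2 / 2 * δ ^ (-(1 : ℝ) / 3) : ℝ) : ℂ)
      = c * ((δ ^ ((1 : ℝ) / 3) : ℝ) : ℂ)⁻¹ := by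
    intro δ hδ
    rw [(aux_scale δ hδ).1, hc]; push_cast; rfl
  rw [hF2, hC2, hF1, ← hF]
  constructor
  · refine aux_transfer _ _ (aux_alpha s c E F hc0 hEF) ?_
    intro δ hδ
    have hz : ((δ ^ ((1 : ℝ) / 3) : ℝ) : ℂ) ≠ 0 := by
      exact_mod_cast (Real.rpow_pos_of_pos hδ _).ne'
    have h3 : ((δ ^ ((1 : ℝ) / 3) : ℝ) : ℂ) ^ 3 = (δ : ℂ) := by
      exact_mod_cast (aux_scale δ hδ).2.2
    unfold alphaLF
    rw [hcast δ hδ, hden δ hδ _ hz h3]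
    generalize ((δ ^ ((1 : ℝ) / 3) : ℝ) : ℂ) = z at hz h3 ⊢
    rw [← h3, neg_mul]
    congr 1
    · rw [div_div_eq_mul_div]
      congr 1
      field_simp
    · field_simp
      ring
  · refine aux_transfer _ _ (aux_beta s c E F hc0 hEF) ?_
    intro δ hδ
    have hz : ((δ ^ ((1 : ℝ) / 3) : ℝ) : ℂ) ≠ 0 := by
      exact_mod_cast (Real.rpow_pos_of_pos hδ _).ne'
    have h3 : ((δ ^ ((1 : ℝ) / 3) : ℝ) : ℂ) ^ 3 = (δ : ℂ) := by
      exact_mod_cast (aux_scale δ hδ).2.2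
    unfold betaLF
    rw [hcast δ hδ, hden δ hδ _ hz h3, ← hE, ← hF]
    generalize ((δ ^ ((1 : ℝ) / 3) : ℝ) : ℂ) = z at hz h3 ⊢
    congr 1
    · rw [div_div_eq_mul_div]
      congr 1
      field_simp
    · congr 2
      have e1 : F ^ 2 + 1 = F * (E + F) := by linear_combination -hEF1
      rw [e1]
      field_simp
      ring
end
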